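/- arXiv:1402.4561 — 7 statements merged into one kernel-verified Lean document; each statement's English description precedes it below -/
import Mathlib

section
/- Let α ∈ (0,1) and λ, μ ∈ (1/2, 1). Then the double inequality C(λa+(1-λ)b, λb+(1-λ)a) < α·A(a,b) + (1-α)·T(a,b) < C(μa+(1-μ)b, μb+(1-μ)a) holds for all a, b > 0 with a ≠ b if and only if λ ≤ 1/2 + √(1-α)/4 and μ ≥ (1/2)·[1 + √((1-α)(4/π - 1))]. -/
/-!
Scaling reduces everything to the relative gap `x = ((a - b) / (a + b))²`: dividing by `A(a, b)` and
subtracting `1`, the contraharmonic mean of the mixed arguments becomes `(2 λ - 1)² x`, while the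
Toader mean becomes `x S(x)` for a function `S` to be determined.

The integrand of `T(s + t, s - t)` at `θ` is `|s + t e^{2iθ}|`, so `T(1 + v, 1 - v)` is the
average of `|√(1 + v z)|²` over the unit circle, and Parseval's identity gives
`T(1 + v, 1 - v) = ∑ cₙ² v²ⁿ` with `cₙ` the binomial coefficients of exponent `1 / 2`. Hence
`S(x) = ∑ cₙ₊₁² xⁿ` increases strictly from `S(0) = 1 / 4` to `T(2, 0) - 1 = 4 / π - 1` on
`(0, 1)`, and the optimal `λ` and `μ` are those for which `(2 λ - 1)²` and `(2 μ - 1)²` equal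
`1 - α` times these two bounds.
-/

open Real

/-- The contraharmonic mean of two positive reals. -/
noncomputable def contraMean (a b : ℝ) : ℝ := (a ^ 2 + b ^ 2) / (a + b)

/-- The arithmetic mean of two reals. -/
noncomputable def arithMean (a b : ℝ) : ℝ := (a + b) / 2

/-- The Toader mean of two positive reals. -/
noncomputable def toaderMean (a b : ℝ) : ℝ :=
  (2 / π) * ∫ θ in (0 : ℝ)..(π / 2), Real.sqrt (a ^ 2 * cos θ ^ 2 + b ^ 2 * sin θ ^ 2)

open Filter Set Metric
open scoped ComplexConjugate Topology

section StrictMono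

variable {β γ : Type*} [LinearOrder β] [TopologicalSpace β] [OrderTopology β] [DenselyOrdered β]
  [LinearOrder γ] [TopologicalSpace γ] [OrderClosedTopology γ] {f : β → γ} {a b : β} {L c : γ}

lemma forall_mem_Ioo_lt_iff_of_tendsto_nhdsGT (hab : a < b) (hf : StrictMonoOn f (Ioo a b))
    (hL : Tendsto f (𝓝[>] a) (𝓝 L)) : (∀ x ∈ Ioo a b, c < f x) ↔ c ≤ L := by
  have : (𝓝[>] a).NeBot := nhdsGT_neBot_of_exists_gt ⟨b, hab⟩
  refine ⟨fun h => ge_of_tendsto hL ?_, fun h x hx => ?_⟩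
  · filter_upwards [Ioo_mem_nhdsGT hab] with x hx using (h x hx).le
  · obtain ⟨y, hay, hyx⟩ := exists_between hx.1
    have hy : y ∈ Ioo a b := ⟨hay, hyx.trans hx.2⟩
    have hLy : L ≤ f y := le_of_tendsto hL <| by
      filter_upwards [Ioo_mem_nhdsGT hay] with z hz
        using hf.monotoneOn ⟨hz.1, hz.2.trans hy.2⟩ hy hz.2.le
    exact (h.trans hLy).trans_lt (hf hy hx hyx)

lemma forall_mem_Ioo_lt_iff_of_tendsto_nhdsLT (hab : a < b) (hf : StrictMonoOn f (Ioo a b))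
    (hL : Tendsto f (𝓝[<] b) (𝓝 L)) : (∀ x ∈ Ioo a b, f x < c) ↔ L ≤ c := by
  have : (𝓝[<] b).NeBot := nhdsLT_neBot_of_exists_lt ⟨a, hab⟩
  refine ⟨fun h => le_of_tendsto hL ?_, fun h x hx => ?_⟩
  · filter_upwards [Ioo_mem_nhdsLT hab] with x hx using (h x hx).le
  · obtain ⟨y, hxy, hyb⟩ := exists_between hx.2
    have hy : y ∈ Ioo a b := ⟨hx.1.trans hxy, hyb⟩
    have hyL : f y ≤ L := ge_of_tendsto hL <| by
      filter_upwards [Ioo_mem_nhdsLT hyb] with z hz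
        using hf.monotoneOn hy ⟨hy.1.trans hz.1, hz.2⟩ hz.1.le
    exact (hf hx hy hxy).trans_le (hyL.trans h)

end StrictMono

section PowerSeries

lemma summable_nat_succ_mul_pow {𝕜 : Type*} [DivisionRing 𝕜] [TopologicalSpace 𝕜]
    [IsTopologicalRing 𝕜] {c : ℕ → 𝕜} {x : 𝕜} (h : Summable fun n => c n * x ^ n) :
    Summable fun n => c (n + 1) * x ^ n := by
  rcases eq_or_ne x 0 with rfl | hx
  · exact summable_of_ne_finset_zero (s := {0}) fun n hn => by simp_all
  · refine (((summable_nat_add_iff 1).2 h).mul_right x⁻¹).congr fun n => ?_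
    rw [pow_succ, mul_assoc, mul_inv_cancel_right₀ hx]

lemma continuousOn_tsum_mul_pow {𝕜 : Type*} [NormedField 𝕜] [CompleteSpace 𝕜] {c : ℕ → 𝕜} {r : ℝ}
    (h : Summable fun n => ‖c n‖ * r ^ n) :
    ContinuousOn (fun x => ∑' n, c n * x ^ n) (closedBall 0 r) := by
  refine continuousOn_tsum (fun n => by fun_prop) h fun n x hx => ?_
  rw [norm_mul, norm_pow]
  gcongr
  exact mem_closedBall_zero_iff.1 hx

lemma strictMonoOn_tsum_mul_pow {c : ℕ → ℝ} {r : ℝ} (hc : ∀ n, 0 ≤ c n) {k : ℕ} (hk : k ≠ 0)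
    (hck : 0 < c k) (hs : ∀ x ∈ Ico 0 r, Summable fun n => c n * x ^ n) :
    StrictMonoOn (fun x => ∑' n, c n * x ^ n) (Ico 0 r) := by
  intro x hx y hy hxy
  have hx0 : 0 ≤ x := hx.1
  refine Summable.tsum_lt_tsum (i := k) (fun n => ?_) ?_ (hs x hx) (hs y hy)
  · have := hc n
    gcongr
  · gcongr

end PowerSeries

section Parseval

lemma hasSum_circleAverage_of_norm_le {ι E : Type*} [Countable ι] [NormedAddCommGroup E]
    [NormedSpace ℝ E] {f : ι → ℂ → E} {g : ℂ → E} {u : ι → ℝ} {c : ℂ} {R : ℝ}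
    (hf : ∀ i, ContinuousOn (f i) (sphere c |R|)) (hu : Summable u)
    (hfu : ∀ i, ∀ z ∈ sphere c |R|, ‖f i z‖ ≤ u i)
    (hg : ∀ z ∈ sphere c |R|, HasSum (fun i => f i z) (g z)) :
    HasSum (fun i => circleAverage (f i) c R) (circleAverage g c R) := by
  have hmem := circleMap_mem_sphere' c R
  refine HasSum.const_smul _ <| intervalIntegral.hasSum_integral_of_dominated_convergence
    (fun i _ => u i) (fun i => ?_) (fun i => .of_forall fun θ _ => hfu i _ (hmem θ))
    (.of_forall fun θ _ => hu) intervalIntegrable_const (.of_forall fun θ _ => hg _ (hmem θ))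
  exact ((hf i).comp_continuous (continuous_circleMap c R) hmem).aestronglyMeasurable

lemma circleAverage_zpow_eq_zero {k : ℤ} (hk : k ≠ 0) :
    circleAverage (fun z : ℂ => z ^ k) 0 1 = 0 := by
  have hint : (∮ z in C(0, 1), (z - 0)⁻¹ • z ^ k) = ∮ z in C(0, 1), (z - 0) ^ (k - 1) := by
    refine circleIntegral.integral_congr zero_le_one fun z hz => ?_
    have hz0 : z ≠ 0 := ne_of_mem_sphere hz one_ne_zero
    simp only [sub_zero, smul_eq_mul, zpow_sub_one₀ hz0, mul_comm]
  rw [circleAverage_eq_circleIntegral one_ne_zero, hint,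
    circleIntegral.integral_sub_zpow_of_ne (by lia), smul_zero]

lemma circleAverage_pow_mul_conj_pow (n m : ℕ) :
    circleAverage (fun z : ℂ => z ^ n * conj (z ^ m)) 0 1 = if n = m then 1 else 0 := by
  have hzpow : EqOn (fun z : ℂ => z ^ n * conj (z ^ m)) (fun z => z ^ (n - m : ℤ))
      (sphere 0 |1|) := fun z hz => by
    have hz1 : ‖z‖ = 1 := by simpa using hz
    have hz0 : z ≠ 0 := norm_ne_zero_iff.1 (hz1 ▸ one_ne_zero)
    simp only [map_pow, ← Complex.inv_eq_conj hz1, zpow_sub₀ hz0, zpow_natCast, inv_pow,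
      div_eq_mul_inv]
  rw [circleAverage_congr_sphere hzpow]
  split_ifs with h
  · simp only [h, sub_self, zpow_zero, circleAverage_const]
  · exact circleAverage_zpow_eq_zero (sub_ne_zero.2 (by exact_mod_cast h))

lemma circleAverage_ofReal (f : ℂ → ℝ) (c : ℂ) (R : ℝ) :
    circleAverage (fun z => (f z : ℂ)) c R = circleAverage f c R := by
  rw [circleAverage, circleAverage, intervalIntegral.integral_ofReal, Complex.real_smul,
    smul_eq_mul, Complex.ofReal_mul]

lemma hasSum_mul_conj {ι : Type*} {f : ι → ℂ} (hf : Summable fun i => ‖f i‖) :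
    HasSum (fun p : ι × ι => f p.1 * conj (f p.2)) ((‖∑' i, f i‖ ^ 2 : ℝ) : ℂ) := by
  have hconj : HasSum (fun i => conj (f i)) (conj (∑' i, f i)) :=
    hf.of_norm.hasSum.map (starRingEnd ℂ) Complex.continuous_conj
  have hf' : Summable fun i => ‖conj (f i)‖ := by simpa only [RCLike.norm_conj] using hf
  have hmul : Summable fun p : ι × ι => f p.1 * conj (f p.2) :=
    summable_mul_of_summable_norm (f := f) (g := fun i => conj (f i)) hf hf'
  rw [Complex.ofReal_pow, ← Complex.mul_conj']
  exact HasSum.mul (f := f) (g := fun i => conj (f i)) hf.of_norm.hasSum hconj hmul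

/-- Parseval's identity: only the diagonal terms of the double series of `|∑ cₙ zⁿ|²` survive. -/
lemma hasSum_circleAverage_norm_sq {c : ℕ → ℂ} (hc : Summable fun n => ‖c n‖) :
    HasSum (fun n => ‖c n‖ ^ 2) (circleAverage (fun z => ‖∑' n, c n * z ^ n‖ ^ 2) 0 1) := by
  have hdouble : HasSum (fun p : ℕ × ℕ => circleAverage
      (fun z => (c p.1 * conj (c p.2)) • (z ^ p.1 * conj (z ^ p.2))) 0 1)
      (circleAverage (fun z => ((‖∑' n, c n * z ^ n‖ ^ 2 : ℝ) : ℂ)) 0 1) := by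
    refine hasSum_circleAverage_of_norm_le (fun p => by fun_prop) (hc.mul_norm hc)
      (fun p z hz => ?_) (fun z hz => ?_)
    · simp_all
    · have hcz : Summable fun n => ‖c n * z ^ n‖ := by simp_all
      simpa only [map_mul, smul_eq_mul, mul_mul_mul_comm] using hasSum_mul_conj hcz
  have hdiag : Function.Injective fun n : ℕ => (n, n) := fun m n h => congrArg Prod.fst h
  simp only [circleAverage_fun_smul, circleAverage_pow_mul_conj_pow] at hdouble
  rw [← hdiag.hasSum_iff, circleAverage_ofReal] at hdouble
  · simpa only [Function.comp_def, if_true, smul_eq_mul, mul_one, Complex.mul_conj',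
      ← Complex.ofReal_pow, Complex.hasSum_ofReal] using hdouble
  · rintro ⟨n, m⟩ hnm
    have hne : n ≠ m := by rintro rfl; exact hnm ⟨n, rfl⟩
    simp only [hne, if_false, smul_zero]

lemma hasSum_choose_mul_pow (a : ℂ) {z : ℂ} (hz : ‖z‖ < 1) :
    HasSum (fun n => Ring.choose a n * z ^ n) ((1 + z) ^ a) := by
  have h := (Complex.one_add_cpow_hasFPowerSeriesOnBall_zero (a := a)).hasSum (y := z)
    (by rw [← ENNReal.ofReal_one, Metric.eball_ofReal]; simpa using hz)
  simpa only [binomialSeries_apply, List.ofFn_const, List.prod_replicate, smul_eq_mul,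
    zero_add] using h

lemma hasSum_circleAverage_norm_one_add_cpow_sq (a : ℂ) {w : ℂ} (hw : ‖w‖ < 1) :
    HasSum (fun n => ‖Ring.choose a n * w ^ n‖ ^ 2)
      (circleAverage (fun z => ‖(1 + w * z) ^ a‖ ^ 2) 0 1) := by
  convert hasSum_circleAverage_norm_sq (hasSum_choose_mul_pow a hw).summable.norm using 1
  refine circleAverage_congr_sphere fun z hz => ?_
  have hwz : ‖w * z‖ < 1 := by simp_all
  simp only [← (hasSum_choose_mul_pow a hwz).tsum_eq, mul_pow, mul_assoc]

end Parseval

section ToaderMean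

lemma toaderMean_mul_mul {r : ℝ} (hr : 0 ≤ r) (a b : ℝ) :
    toaderMean (r * a) (r * b) = r * toaderMean a b := by
  have hsqrt (θ : ℝ) : √((r * a) ^ 2 * cos θ ^ 2 + (r * b) ^ 2 * sin θ ^ 2) =
      r * √(a ^ 2 * cos θ ^ 2 + b ^ 2 * sin θ ^ 2) := by
    rw [← sqrt_sq hr, ← sqrt_mul (sq_nonneg r), sqrt_sq hr]
    ring_nf
  simp only [toaderMean, hsqrt, intervalIntegral.integral_const_mul]
  ring

lemma continuous_toaderMean : Continuous fun p : ℝ × ℝ => toaderMean p.1 p.2 :=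
  continuous_const.mul <|
    intervalIntegral.continuous_parametric_intervalIntegral_of_continuous' (by fun_prop) _ _

lemma toaderMean_zero_right {a : ℝ} (ha : 0 ≤ a) : toaderMean a 0 = 2 * a / π := by
  have hint : ∫ θ in (0 : ℝ)..(π / 2), √(a ^ 2 * cos θ ^ 2 + 0 ^ 2 * sin θ ^ 2) =
      ∫ θ in (0 : ℝ)..(π / 2), a * cos θ := by
    refine intervalIntegral.integral_congr fun θ hθ => ?_
    rw [uIcc_of_le (by positivity)] at hθ
    have hcos : 0 ≤ cos θ := cos_nonneg_of_mem_Icc ⟨by linarith [hθ.1, pi_pos], hθ.2⟩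
    have hsq : a ^ 2 * cos θ ^ 2 + 0 ^ 2 * sin θ ^ 2 = (a * cos θ) ^ 2 := by ring
    simp only [hsq, sqrt_sq (mul_nonneg ha hcos)]
  rw [toaderMean, hint, intervalIntegral.integral_const_mul, integral_cos, sin_pi_div_two, sin_zero]
  ring

lemma integral_eq_two_mul_integral_half {f : ℝ → ℝ} (hf : Continuous f) {c : ℝ}
    (hsymm : ∀ x, f (c - x) = f x) : ∫ x in 0..c, f x = 2 * ∫ x in 0..(c / 2), f x := by
  have hhalf : ∫ x in (c / 2)..c, f x = ∫ x in 0..(c / 2), f x := by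
    simpa only [hsymm, sub_zero, sub_half]
      using (intervalIntegral.integral_comp_sub_left f c (a := 0) (b := c / 2)).symm
  rw [← intervalIntegral.integral_add_adjacent_intervals (hf.intervalIntegrable 0 (c / 2))
    (hf.intervalIntegrable (c / 2) c), hhalf, two_mul]

lemma norm_add_mul_circleMap_two_mul (s t θ : ℝ) :
    ‖(s + t * circleMap 0 1 (2 * θ) : ℂ)‖ =
      √((s + t) ^ 2 * cos θ ^ 2 + (s - t) ^ 2 * sin θ ^ 2) := by
  have hre : (s + t * circleMap 0 1 (2 * θ) : ℂ).re = s + t * cos (2 * θ) := by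
    rw [circleMap_zero, Complex.ofReal_one, one_mul, Complex.add_re, Complex.ofReal_re,
      Complex.re_ofReal_mul, Complex.exp_ofReal_mul_I_re]
  have him : (s + t * circleMap 0 1 (2 * θ) : ℂ).im = t * sin (2 * θ) := by
    rw [circleMap_zero, Complex.ofReal_one, one_mul, Complex.add_im, Complex.ofReal_im,
      Complex.im_ofReal_mul, Complex.exp_ofReal_mul_I_im, zero_add]
  rw [Complex.norm_eq_sqrt_sq_add_sq, hre, him]
  congr 1
  rw [cos_two_mul, sin_two_mul]
  linear_combination (4 * t ^ 2 * cos θ ^ 2 - (s - t) ^ 2) * sin_sq_add_cos_sq θ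

/-- In the half-angle variable the elliptic integral becomes an average over the unit circle. -/
lemma toaderMean_add_sub (s t : ℝ) :
    toaderMean (s + t) (s - t) = circleAverage (fun z : ℂ => ‖s + t * z‖) 0 1 := by
  set f : ℝ → ℝ := fun θ => ‖(s + t * circleMap 0 1 (2 * θ) : ℂ)‖ with hf
  have hsymm (θ : ℝ) : f (π - θ) = f θ := by
    simp only [hf, norm_add_mul_circleMap_two_mul, cos_pi_sub, sin_pi_sub, neg_sq]
  have hscale : ∫ θ in 0..(2 * π), ‖(s + t * circleMap 0 1 θ : ℂ)‖ = 2 * ∫ θ in 0..π, f θ := by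
    simpa only [mul_zero] using (intervalIntegral.mul_integral_comp_mul_left
      (f := fun θ => ‖(s + t * circleMap 0 1 θ : ℂ)‖) (a := 0) (b := π) 2).symm
  rw [circleAverage, hscale, integral_eq_two_mul_integral_half (by fun_prop) hsymm, toaderMean]
  simp only [hf, norm_add_mul_circleMap_two_mul, smul_eq_mul]
  field_simp

lemma hasSum_toaderMean_one_add_one_sub {v : ℝ} (hv : |v| < 1) :
    HasSum (fun n => Ring.choose (1 / 2 : ℝ) n ^ 2 * (v ^ 2) ^ n) (toaderMean (1 + v) (1 - v)) := by
  have h := hasSum_circleAverage_norm_one_add_cpow_sq ((1 / 2 : ℝ) : ℂ) (w := v) (by simpa using hv)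
  convert h using 1
  · ext n
    rw [← Complex.ofReal_choose, ← Complex.ofReal_pow, ← Complex.ofReal_mul, Complex.norm_real,
      norm_eq_abs, sq_abs]
    ring
  · simp only [toaderMean_add_sub, Complex.norm_cpow_real, ← sqrt_eq_rpow,
      sq_sqrt (norm_nonneg _), Complex.ofReal_one]

end ToaderMean

section ToaderSeries

lemma abs_sqrt_lt_one {x : ℝ} (hx : x < 1) : |√x| < 1 := by
  rwa [abs_of_nonneg (sqrt_nonneg x), sqrt_lt' one_pos, one_pow]

/-- The function `S` with `T(1 + v, 1 - v) = 1 + v² S(v²)`. Its coefficients are the squares of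
those of `√(1 + z)`, shifted by one; the relevant arguments are those in `[0, 1)`. -/
noncomputable def toaderSeries (x : ℝ) : ℝ := ∑' n, Ring.choose (1 / 2 : ℝ) (n + 1) ^ 2 * x ^ n

lemma toaderMean_one_add_one_sub {v : ℝ} (hv : |v| < 1) :
    toaderMean (1 + v) (1 - v) = 1 + v ^ 2 * toaderSeries (v ^ 2) := by
  have h := hasSum_toaderMean_one_add_one_sub hv
  rw [← h.tsum_eq, h.summable.tsum_eq_zero_add, toaderSeries, ← tsum_mul_left]
  simp only [Ring.choose_zero_right, one_pow, pow_zero, mul_one, pow_succ' (v ^ 2),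
    mul_left_comm (v ^ 2)]

lemma summable_toaderSeries {x : ℝ} (hx : x ∈ Ico 0 1) :
    Summable fun n => Ring.choose (1 / 2 : ℝ) (n + 1) ^ 2 * x ^ n := by
  refine summable_nat_succ_mul_pow (c := fun n => Ring.choose (1 / 2 : ℝ) n ^ 2) ?_
  simpa only [sq_sqrt hx.1]
    using (hasSum_toaderMean_one_add_one_sub (abs_sqrt_lt_one hx.2)).summable

lemma strictMonoOn_toaderSeries : StrictMonoOn toaderSeries (Ico 0 1) := by
  have hchoose : 0 < Ring.choose (1 / 2 : ℝ) (1 + 1) ^ 2 := by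
    norm_num [Ring.choose_eq_smul, descPochhammer_succ_right, Polynomial.smeval_mul]
  exact strictMonoOn_tsum_mul_pow (c := fun n => Ring.choose (1 / 2 : ℝ) (n + 1) ^ 2)
    (fun n => sq_nonneg _) one_ne_zero hchoose fun x hx => summable_toaderSeries hx

lemma toaderSeries_zero : toaderSeries 0 = 1 / 4 := by
  rw [toaderSeries, tsum_eq_single 0 fun n hn => by rw [zero_pow hn, mul_zero]]
  norm_num

lemma tendsto_toaderSeries_zero : Tendsto toaderSeries (𝓝[>] 0) (𝓝 (1 / 4)) := by
  have hs := summable_toaderSeries (x := 1 / 2) (by norm_num)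
  have hcont : ContinuousOn toaderSeries (closedBall 0 (1 / 2)) :=
    continuousOn_tsum_mul_pow (hs.congr fun n => by rw [norm_pow, norm_eq_abs, sq_abs])
  rw [← toaderSeries_zero]
  exact (hcont.continuousAt (closedBall_mem_nhds 0 one_half_pos)).tendsto.mono_left
    nhdsWithin_le_nhds

lemma tendsto_toaderSeries_one : Tendsto toaderSeries (𝓝[<] 1) (𝓝 (4 / π - 1)) := by
  have hcont : ContinuousAt (fun x => (toaderMean (1 + √x) (1 - √x) - 1) / x) 1 := by
    have hT : Continuous fun x => toaderMean (1 + √x) (1 - √x) :=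
      continuous_toaderMean.comp (f := fun x => (1 + √x, 1 - √x)) (by fun_prop)
    exact (hT.continuousAt.sub continuousAt_const).div continuousAt_id one_ne_zero
  have hlim : (toaderMean (1 + √1) (1 - √1) - 1) / 1 = 4 / π - 1 := by
    rw [sqrt_one, sub_self, toaderMean_zero_right (by norm_num)]
    norm_num
  rw [← hlim]
  refine (hcont.tendsto.mono_left nhdsWithin_le_nhds).congr' ?_
  filter_upwards [Ioo_mem_nhdsLT zero_lt_one] with x hx
  rw [toaderMean_one_add_one_sub (abs_sqrt_lt_one hx.2), sq_sqrt hx.1.le, add_sub_cancel_left,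
    mul_div_cancel_left₀ _ hx.1.ne']

lemma forall_lt_toaderSeries_iff {c : ℝ} : (∀ x ∈ Ioo 0 1, c < toaderSeries x) ↔ c ≤ 1 / 4 :=
  forall_mem_Ioo_lt_iff_of_tendsto_nhdsGT one_pos
    (strictMonoOn_toaderSeries.mono Ioo_subset_Ico_self) tendsto_toaderSeries_zero

lemma forall_toaderSeries_lt_iff {c : ℝ} : (∀ x ∈ Ioo 0 1, toaderSeries x < c) ↔ 4 / π - 1 ≤ c :=
  forall_mem_Ioo_lt_iff_of_tendsto_nhdsLT one_pos
    (strictMonoOn_toaderSeries.mono Ioo_subset_Ico_self) tendsto_toaderSeries_one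

end ToaderSeries

section RelativeGap

/-- The square of `v = (a - b) / (a + b)`, so that `a = A(a, b) (1 + v)` and `b = A(a, b) (1 - v)`.
It determines a symmetric homogeneous mean of `a` and `b` up to the factor `A(a, b)`. -/
noncomputable def sqRelGap (a b : ℝ) : ℝ := ((a - b) / (a + b)) ^ 2

variable {a b : ℝ}

lemma abs_sub_div_add_lt_one (ha : 0 < a) (hb : 0 < b) : |(a - b) / (a + b)| < 1 := by
  have hab : 0 < a + b := add_pos ha hb
  rw [abs_lt, lt_div_iff₀ hab, div_lt_iff₀ hab]
  constructor <;> linarith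

lemma sqRelGap_pos (ha : 0 < a) (hb : 0 < b) (hab : a ≠ b) : 0 < sqRelGap a b :=
  sq_pos_of_ne_zero (div_ne_zero (sub_ne_zero.2 hab) (add_pos ha hb).ne')

lemma forall_sqRelGap_iff {p : ℝ → Prop} :
    (∀ a b : ℝ, 0 < a → 0 < b → a ≠ b → p (sqRelGap a b)) ↔ ∀ x ∈ Ioo 0 1, p x := by
  refine ⟨fun h x hx => ?_, fun h a b ha hb hab => h _ ⟨sqRelGap_pos ha hb hab,
    (sq_lt_one_iff_abs_lt_one _).2 (abs_sub_div_add_lt_one ha hb)⟩⟩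
  have hpos : 0 < √x := sqrt_pos.2 hx.1
  have hlt : √x < 1 := (abs_lt.1 (abs_sqrt_lt_one hx.2)).2
  have hgap : sqRelGap (1 + √x) (1 - √x) = x := by
    rw [sqRelGap, div_pow, div_eq_iff (by norm_num)]
    linear_combination 4 * sq_sqrt hx.1.le
  exact hgap ▸ h (1 + √x) (1 - √x) (by linarith) (by linarith) (by linarith)

lemma contraMean_mix (hab : a + b ≠ 0) (l : ℝ) :
    contraMean (l * a + (1 - l) * b) (l * b + (1 - l) * a) =
      arithMean a b * (1 + sqRelGap a b * (2 * l - 1) ^ 2) := by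
  have hsum : l * a + (1 - l) * b + (l * b + (1 - l) * a) = a + b := by ring
  rw [contraMean, hsum, arithMean, sqRelGap]
  field_simp
  ring

lemma toaderMean_eq_arithMean_mul (ha : 0 < a) (hb : 0 < b) :
    toaderMean a b = arithMean a b * (1 + sqRelGap a b * toaderSeries (sqRelGap a b)) := by
  have hab : 0 < a + b := add_pos ha hb
  have hA : 0 ≤ arithMean a b := (half_pos hab).le
  rw [sqRelGap, ← toaderMean_one_add_one_sub (abs_sub_div_add_lt_one ha hb),
    ← toaderMean_mul_mul hA, arithMean]
  congr 1 <;> field_simp <;> ring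

lemma arithMean_toaderMean_combination (ha : 0 < a) (hb : 0 < b) (α : ℝ) :
    α * arithMean a b + (1 - α) * toaderMean a b =
      arithMean a b * (1 + sqRelGap a b * ((1 - α) * toaderSeries (sqRelGap a b))) := by
  rw [toaderMean_eq_arithMean_mul ha hb]
  ring

lemma arithMean_mul_lt_iff (ha : 0 < a) (hb : 0 < b) (hab : a ≠ b) (p q : ℝ) :
    arithMean a b * (1 + sqRelGap a b * p) < arithMean a b * (1 + sqRelGap a b * q) ↔ p < q := by
  have hA : 0 < arithMean a b := half_pos (add_pos ha hb)
  rw [mul_lt_mul_iff_right₀ hA, add_lt_add_iff_left, mul_lt_mul_iff_right₀ (sqRelGap_pos ha hb hab)]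

end RelativeGap

section Sharpness

variable {α : ℝ}

theorem forall_contraMean_lt_iff (hα : α < 1) (l : ℝ) :
    (∀ a b : ℝ, 0 < a → 0 < b → a ≠ b →
      contraMean (l * a + (1 - l) * b) (l * b + (1 - l) * a)
        < α * arithMean a b + (1 - α) * toaderMean a b) ↔
    |l - 1 / 2| ≤ √(1 - α) / 4 := by
  have hα' : 0 < 1 - α := sub_pos.2 hα
  calc
    _ ↔ ∀ a b : ℝ, 0 < a → 0 < b → a ≠ b →
        (2 * l - 1) ^ 2 / (1 - α) < toaderSeries (sqRelGap a b) := by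
      refine forall₅_congr fun a b ha hb hab => ?_
      rw [contraMean_mix (add_pos ha hb).ne', arithMean_toaderMean_combination ha hb,
        arithMean_mul_lt_iff ha hb hab, div_lt_iff₀' hα']
    _ ↔ (2 * l - 1) ^ 2 / (1 - α) ≤ 1 / 4 := forall_sqRelGap_iff.trans forall_lt_toaderSeries_iff
    _ ↔ |l - 1 / 2| ≤ √(1 - α) / 4 := by
      rw [div_le_iff₀ hα', le_div_iff₀ four_pos, le_sqrt (by positivity) hα'.le, mul_pow, sq_abs]
      constructor <;> intro h <;> linarith

theorem forall_lt_contraMean_iff (hα : α < 1) (m : ℝ) :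
    (∀ a b : ℝ, 0 < a → 0 < b → a ≠ b →
      α * arithMean a b + (1 - α) * toaderMean a b
        < contraMean (m * a + (1 - m) * b) (m * b + (1 - m) * a)) ↔
    1 / 2 * √((1 - α) * (4 / π - 1)) ≤ |m - 1 / 2| := by
  have hα' : 0 < 1 - α := sub_pos.2 hα
  calc
    _ ↔ ∀ a b : ℝ, 0 < a → 0 < b → a ≠ b →
        toaderSeries (sqRelGap a b) < (2 * m - 1) ^ 2 / (1 - α) := by
      refine forall₅_congr fun a b ha hb hab => ?_
      rw [contraMean_mix (add_pos ha hb).ne', arithMean_toaderMean_combination ha hb,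
        arithMean_mul_lt_iff ha hb hab, lt_div_iff₀' hα']
    _ ↔ 4 / π - 1 ≤ (2 * m - 1) ^ 2 / (1 - α) :=
      forall_sqRelGap_iff.trans forall_toaderSeries_lt_iff
    _ ↔ 1 / 2 * √((1 - α) * (4 / π - 1)) ≤ |m - 1 / 2| := by
      have habs : |2 * m - 1| = 2 * |m - 1 / 2| := by
        rw [← abs_two, ← abs_mul, abs_two]
        ring_nf
      rw [le_div_iff₀' hα', ← sq_abs, ← sqrt_le_left (abs_nonneg _), habs]
      constructor <;> intro h <;> linarith

end Sharpness

theorem stmt0_general {α : ℝ} (hα : α < 1) (lam μ : ℝ) :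
    (∀ a b : ℝ, 0 < a → 0 < b → a ≠ b →
      contraMean (lam * a + (1 - lam) * b) (lam * b + (1 - lam) * a)
        < α * arithMean a b + (1 - α) * toaderMean a b ∧
      α * arithMean a b + (1 - α) * toaderMean a b
        < contraMean (μ * a + (1 - μ) * b) (μ * b + (1 - μ) * a)) ↔
    (|lam - 1 / 2| ≤ √(1 - α) / 4 ∧
      1 / 2 * √((1 - α) * (4 / π - 1)) ≤ |μ - 1 / 2|) := by
  rw [← forall_contraMean_lt_iff hα, ← forall_lt_contraMean_iff hα]
  simp only [imp_and, forall_and]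

theorem stmt0 (α lam μ : ℝ) (hα : α ∈ Set.Ioo (0 : ℝ) 1)
    (hlam : lam ∈ Set.Ioo (1 / 2 : ℝ) 1) (hμ : μ ∈ Set.Ioo (1 / 2 : ℝ) 1) :
    (∀ a b : ℝ, 0 < a → 0 < b → a ≠ b →
      contraMean (lam * a + (1 - lam) * b) (lam * b + (1 - lam) * a)
        < α * arithMean a b + (1 - α) * toaderMean a b ∧
      α * arithMean a b + (1 - α) * toaderMean a b
        < contraMean (μ * a + (1 - μ) * b) (μ * b + (1 - μ) * a)) ↔
    (lam ≤ 1 / 2 + Real.sqrt (1 - α) / 4 ∧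
      μ ≥ 1 / 2 * (1 + Real.sqrt ((1 - α) * (4 / π - 1)))) := by
  rw [stmt0_general hα.2, abs_of_pos (sub_pos.2 hlam.1), abs_of_pos (sub_pos.2 hμ.1),
    sub_le_iff_le_add', le_sub_iff_add_le', mul_add, mul_one]
end

section
/- Let α ∈ (0,1) and λ ∈ (1/2, 1) with λ ≤ 1/2 + √(1-α)/4. Then for all a, b > 0 with a ≠ b, one has C(λa+(1-λ)b, λb+(1-λ)a) < α·A(a,b) + (1-α)·T(a,b). -/
/-!
With `A = (a + b) / 2` and `d = (a - b) / 2`, the integrand of the Toader mean `T` of `a` and `b` is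
`‖A + d * exp (2 * i * θ)‖`, so `T` is the mean of `‖z‖` over the circle with centre `A` and radius
`d`. Since `√(z / A)` is holomorphic on the closed disc, `‖z‖ = A * ‖√(z / A)‖ ^ 2` turns this into
a quadratic mean, which by Parseval's identity exceeds the contribution of the first two Taylor
coefficients `1` and `1 / (2 * A)`. This gives `T > A + d ^ 2 / (4 * A)`. The contraharmonic mean
equals `A + (2 * lam - 1) ^ 2 * d ^ 2 / A`, where `(2 * lam - 1) ^ 2 ≤ (1 - α) / 4`.
-/

open Real

open Metric ComplexConjugate

section CircleAverage

variable {E : Type*} [NormedAddCommGroup E] {c : ℂ} {R : ℝ}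

theorem circleAverage_pos {f : ℂ → ℝ} (hf : ContinuousOn f (sphere c |R|))
    (hf₀ : ∀ z ∈ sphere c |R|, 0 ≤ f z) (hpos : ∃ z ∈ sphere c |R|, 0 < f z) :
    0 < circleAverage f c R := by
  obtain ⟨z, hz, hfz⟩ := hpos
  rw [← image_circleMap_Ioc] at hz
  obtain ⟨θ, hθ, rfl⟩ := hz
  have hcont : Continuous fun θ ↦ f (circleMap c R θ) :=
    hf.comp_continuous (continuous_circleMap c R) (circleMap_mem_sphere' c R)
  exact mul_pos (inv_pos.2 two_pi_pos) <|
    intervalIntegral.integral_pos two_pi_pos hcont.continuousOn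
      (fun φ _ ↦ hf₀ _ (circleMap_mem_sphere' c R φ)) ⟨θ, Set.Ioc_subset_Icc_self hθ, hfz⟩

theorem circleMap_two_pi_sub (x R θ : ℝ) :
    circleMap x R (2 * π - θ) = conj (circleMap x R θ) := by
  rw [(periodic_circleMap x R).sub_eq']
  simp [circleMap, ← Complex.exp_conj]

theorem circleAverage_eq_integral_zero_pi [NormedSpace ℝ E] {f : ℂ → E} {x : ℝ}
    (hf : CircleIntegrable f x R) (hconj : ∀ z, f (conj z) = f z) :
    circleAverage f x R = π⁻¹ • ∫ θ in 0..π, f (circleMap x R θ) := by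
  have hreflect : ∫ θ in π..2 * π, f (circleMap x R θ) = ∫ θ in 0..π, f (circleMap x R θ) := by
    have h := intervalIntegral.integral_comp_sub_left (a := 0) (b := π)
      (fun θ ↦ f (circleMap x R θ)) (2 * π)
    simp_rw [circleMap_two_pi_sub, hconj] at h
    rwa [sub_zero, show 2 * π - π = π by ring, eq_comm] at h
  have hint : ∀ u v,
      IntervalIntegrable (fun θ ↦ f (circleMap x R θ)) MeasureTheory.volume u v :=
    ((periodic_circleMap x R).comp f).intervalIntegrable₀ two_pi_pos.ne' hf
  rw [circleAverage_def,
    ← intervalIntegral.integral_add_adjacent_intervals (hint 0 π) (hint π (2 * π)),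
    hreflect, ← two_smul ℝ, smul_smul]
  congr 1
  field_simp

theorem circleAverage_norm_sq_eq_norm_circleAverage_sq_add [InnerProductSpace ℝ E] [CompleteSpace E]
    {f : ℂ → E} (hf : ContinuousOn f (sphere c |R|)) :
    circleAverage (fun z ↦ ‖f z‖ ^ 2) c R = ‖circleAverage f c R‖ ^ 2 +
      circleAverage (fun z ↦ ‖f z - circleAverage f c R‖ ^ 2) c R := by
  set m := circleAverage f c R with hm
  let L : E →L[ℝ] ℝ := (2 : ℝ) • innerSL ℝ m
  have hsub : ContinuousOn (fun z ↦ f z - m) (sphere c |R|) := by fun_prop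
  have hcross : circleAverage (fun z ↦ L (f z - m)) c R = 0 := by
    have hmean : circleAverage (fun z ↦ f z - m) c R = 0 := by
      rw [circleAverage_fun_sub hf.circleIntegrable' (circleIntegrable_const m c R),
        circleAverage_const, ← hm, sub_self]
    exact (L.circleAverage_comp_comm hsub.circleIntegrable').trans (by rw [hmean, map_zero])
  have hexpand : ∀ z, ‖f z‖ ^ 2 = ‖m‖ ^ 2 + (L (f z - m) + ‖f z - m‖ ^ 2) := fun z ↦ by
    have h := norm_add_sq_real m (f z - m)
    rw [add_sub_cancel] at h
    simpa [L, add_assoc] using h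
  have hL : ContinuousOn (fun z ↦ L (f z - m)) (sphere c |R|) := by fun_prop
  have hsq : ContinuousOn (fun z ↦ ‖f z - m‖ ^ 2) (sphere c |R|) := by fun_prop
  simp_rw [hexpand]
  rw [circleAverage_fun_add (circleIntegrable_const _ c R) (hL.fun_add hsq).circleIntegrable',
    circleAverage_fun_add hL.circleIntegrable' hsq.circleIntegrable', circleAverage_const,
    hcross, zero_add]

end CircleAverage

section Parseval

variable {E : Type*} [NormedAddCommGroup E] [InnerProductSpace ℂ E] [CompleteSpace E]
  {f : ℂ → E} {c : ℂ} {R : ℝ}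

theorem circleAverage_norm_sq_eq_norm_sq_add (hf : DiffContOnCl ℂ f (ball c |R|)) :
    circleAverage (fun z ↦ ‖f z‖ ^ 2) c R =
      ‖f c‖ ^ 2 + circleAverage (fun z ↦ ‖f z - f c‖ ^ 2) c R := by
  let _ : InnerProductSpace ℝ E := .complexToReal
  have hcont : ContinuousOn f (sphere c |R|) := hf.continuousOn_ball.mono sphere_subset_closedBall
  rw [circleAverage_norm_sq_eq_norm_circleAverage_sq_add hcont, hf.circleAverage]

theorem norm_sq_lt_circleAverage_norm_sq (hf : DiffContOnCl ℂ f (ball c |R|))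
    (hne : ∃ z ∈ sphere c |R|, f z ≠ f c) :
    ‖f c‖ ^ 2 < circleAverage (fun z ↦ ‖f z‖ ^ 2) c R := by
  obtain ⟨z, hz, hfz⟩ := hne
  have hcont : ContinuousOn f (sphere c |R|) := hf.continuousOn_ball.mono sphere_subset_closedBall
  rw [circleAverage_norm_sq_eq_norm_sq_add hf, lt_add_iff_pos_right]
  exact circleAverage_pos (by fun_prop) (fun _ _ ↦ by positivity)
    ⟨z, hz, pow_pos (norm_pos_iff.2 (sub_ne_zero.2 hfz)) 2⟩

/-- Iterating this identity along the successive quotients `dslope f c` gives Parseval's identity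
for the Taylor coefficients of `f`, one coefficient at a time. -/
theorem circleAverage_norm_sq_eq_norm_sq_add_dslope (hf : DiffContOnCl ℂ f (ball c |R|)) :
    circleAverage (fun z ↦ ‖f z‖ ^ 2) c R =
      ‖f c‖ ^ 2 + R ^ 2 * circleAverage (fun z ↦ ‖dslope f c z‖ ^ 2) c R := by
  have hquot : Set.EqOn (fun z ↦ ‖f z - f c‖ ^ 2) (fun z ↦ R ^ 2 • ‖dslope f c z‖ ^ 2)
      (sphere c |R|) := fun z hz ↦ by
    simp only [← sub_smul_dslope f c z, norm_smul, mem_sphere_iff_norm.1 hz, mul_pow, sq_abs,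
      smul_eq_mul]
  rw [circleAverage_norm_sq_eq_norm_sq_add hf, circleAverage_congr_sphere hquot,
    circleAverage_fun_smul, smul_eq_mul]

theorem norm_sq_add_norm_deriv_sq_lt_circleAverage_norm_sq
    (hf : DifferentiableOn ℂ f (closedBall c |R|))
    (hne : ∃ z ∈ sphere c |R|, f z ≠ f c + (z - c) • deriv f c) :
    ‖f c‖ ^ 2 + R ^ 2 * ‖deriv f c‖ ^ 2 < circleAverage (fun z ↦ ‖f z‖ ^ 2) c R := by
  have hR : R ≠ 0 := by
    rintro rfl
    simp at hne
  have hdslope : DifferentiableOn ℂ (dslope f c) (closedBall c |R|) :=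
    (Complex.differentiableOn_dslope (closedBall_mem_nhds c (abs_pos.2 hR))).2 hf
  have hne' : ∃ z ∈ sphere c |R|, dslope f c z ≠ dslope f c c := by
    refine hne.imp fun z ↦ And.imp_right fun hz h ↦ hz ?_
    rw [← dslope_same, ← h, sub_smul_dslope, add_sub_cancel]
  rw [circleAverage_norm_sq_eq_norm_sq_add_dslope (hf.diffContOnCl_ball subset_rfl),
    ← dslope_same f c]
  gcongr
  exact norm_sq_lt_circleAverage_norm_sq (hdslope.diffContOnCl_ball subset_rfl) hne'

end Parseval

section NormAverage

variable {c z : ℂ} {R : ℝ}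

theorem div_mem_slitPlane_of_norm_sub_lt (hz : ‖z - c‖ < ‖c‖) : z / c ∈ Complex.slitPlane := by
  have hc : 0 < ‖c‖ := (norm_nonneg _).trans_lt hz
  have hnorm : ‖z / c - 1‖ < 1 := by
    rwa [div_sub_one (norm_pos_iff.1 hc), norm_div, div_lt_one hc]
  simpa using Complex.mem_slitPlane_of_norm_lt_one hnorm

theorem norm_add_sq_div_lt_circleAverage_norm (hR : R ≠ 0) (hRc : |R| < ‖c‖) :
    ‖c‖ + R ^ 2 / (4 * ‖c‖) < circleAverage (‖·‖) c R := by
  have hc : c ≠ 0 := norm_pos_iff.1 ((abs_nonneg R).trans_lt hRc)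
  let f : ℂ → ℂ := fun z ↦ (z / c) ^ (1 / 2 : ℂ)
  have hf_sq (z : ℂ) : f z ^ 2 = z / c := by simp [f]
  have hf_center : f c = 1 := by simp [f, hc]
  have hf_diff : DifferentiableOn ℂ f (closedBall c |R|) :=
    (differentiableOn_id.div_const c).cpow_const
      fun z hz ↦ div_mem_slitPlane_of_norm_sub_lt ((mem_closedBall_iff_norm.1 hz).trans_lt hRc)
  have hf_deriv : deriv f c = 1 / (2 * c) := by
    have h : HasDerivAt f _ c := ((hasDerivAt_id c).div_const c).cpow_const (c := 1 / 2)
      (div_mem_slitPlane_of_norm_sub_lt (by simpa using hc))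
    rw [h.deriv, id, div_self hc, Complex.one_cpow, mul_one]
    field_simp
  have hf_not_affine : f (c + R) ≠ f c + (c + R - c) • deriv f c := fun h ↦ hR <| by
    have hsq := hf_sq (c + R)
    rw [h, hf_center, hf_deriv, smul_eq_mul] at hsq
    field_simp at hsq
    have : (R : ℂ) ^ 2 = 0 := by linear_combination hsq
    simpa using this
  have hnorm : (fun z : ℂ ↦ ‖z‖) = fun z ↦ ‖c‖ • ‖f z‖ ^ 2 := by
    ext z
    rw [← norm_pow, hf_sq, norm_div, smul_eq_mul, mul_div_cancel₀ _ (norm_ne_zero_iff.2 hc)]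
  have hParseval := norm_sq_add_norm_deriv_sq_lt_circleAverage_norm_sq hf_diff
    ⟨c + R, by simp, hf_not_affine⟩
  rw [hf_center, hf_deriv] at hParseval
  rw [hnorm, circleAverage_fun_smul, smul_eq_mul]
  refine lt_of_eq_of_lt ?_ (mul_lt_mul_of_pos_left hParseval (norm_pos_iff.2 hc))
  simp only [norm_div, norm_mul, norm_one, Complex.norm_ofNat]
  field_simp
  ring

end NormAverage

theorem arithMean_pos {a b : ℝ} (ha : 0 < a) (hb : 0 < b) : 0 < arithMean a b :=
  half_pos (add_pos ha hb)

theorem norm_circleMap_arithMean (a b θ : ℝ) :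
    ‖circleMap (arithMean a b) ((a - b) / 2) (2 * θ)‖ =
      √(a ^ 2 * cos θ ^ 2 + b ^ 2 * sin θ ^ 2) := by
  have hre : (circleMap (arithMean a b) ((a - b) / 2) (2 * θ)).re =
      (a + b) / 2 + (a - b) / 2 * cos (2 * θ) := by
    simp [circleMap, arithMean, Complex.exp_re]
  have him : (circleMap (arithMean a b) ((a - b) / 2) (2 * θ)).im =
      (a - b) / 2 * sin (2 * θ) := by
    simp [circleMap, Complex.exp_im]
  rw [Complex.norm_eq_sqrt_sq_add_sq, hre, him, cos_two_mul, sin_two_mul]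
  congr 1
  linear_combination ((a - b) ^ 2 * cos θ ^ 2 - b ^ 2) * sin_sq_add_cos_sq θ

theorem toaderMean_eq_circleAverage (a b : ℝ) :
    toaderMean a b = circleAverage (‖·‖) (arithMean a b) ((a - b) / 2) := by
  rw [circleAverage_eq_integral_zero_pi (continuous_norm.continuousOn.circleIntegrable')
    Complex.norm_conj, toaderMean]
  simp_rw [← norm_circleMap_arithMean]
  rw [intervalIntegral.integral_comp_mul_left
    (fun θ ↦ ‖circleMap (arithMean a b) ((a - b) / 2) θ‖) two_ne_zero]
  simp only [mul_zero, smul_eq_mul, mul_div_cancel₀ π two_ne_zero]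
  ring

theorem arithMean_add_lt_toaderMean {a b : ℝ} (ha : 0 < a) (hb : 0 < b) (hab : a ≠ b) :
    arithMean a b + ((a - b) / 2) ^ 2 / (4 * arithMean a b) < toaderMean a b := by
  have hA : 0 < arithMean a b := arithMean_pos ha hb
  have hd : (a - b) / 2 ≠ 0 := div_ne_zero (sub_ne_zero.2 hab) two_ne_zero
  have hdA : |(a - b) / 2| < arithMean a b := by
    unfold arithMean
    exact abs_lt.2 ⟨by linarith, by linarith⟩
  have hnorm : ‖(arithMean a b : ℂ)‖ = arithMean a b := Complex.norm_of_nonneg hA.le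
  have h := norm_add_sq_div_lt_circleAverage_norm hd (hdA.trans_eq hnorm.symm)
  rwa [hnorm, ← toaderMean_eq_circleAverage] at h

theorem contraMean_convexCombination {a b : ℝ} (hab : a + b ≠ 0) (lam : ℝ) :
    contraMean (lam * a + (1 - lam) * b) (lam * b + (1 - lam) * a) =
      arithMean a b + (2 * lam - 1) ^ 2 * (((a - b) / 2) ^ 2 / arithMean a b) := by
  have hsum : lam * a + (1 - lam) * b + (lam * b + (1 - lam) * a) = a + b := by ring
  rw [contraMean, arithMean, hsum]
  field_simp
  ring

theorem stmt1_general (α lam : ℝ) (hα : α < 1) (hlam : |lam - 1 / 2| ≤ √(1 - α) / 4)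
    (a b : ℝ) (ha : 0 < a) (hb : 0 < b) (hab : a ≠ b) :
    contraMean (lam * a + (1 - lam) * b) (lam * b + (1 - lam) * a)
      < α * arithMean a b + (1 - α) * toaderMean a b := by
  have hα' : 0 < 1 - α := sub_pos.2 hα
  have hA : 0 < arithMean a b := arithMean_pos ha hb
  have hlam_sq : (2 * lam - 1) ^ 2 ≤ (1 - α) / 4 := by
    have h : (lam - 1 / 2) ^ 2 ≤ (√(1 - α) / 4) ^ 2 := sq_le_sq.2 (hlam.trans (le_abs_self _))
    rw [div_pow, sq_sqrt hα'.le] at h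
    linarith
  calc contraMean (lam * a + (1 - lam) * b) (lam * b + (1 - lam) * a)
      = arithMean a b + (2 * lam - 1) ^ 2 * (((a - b) / 2) ^ 2 / arithMean a b) :=
        contraMean_convexCombination (by positivity) lam
    _ ≤ arithMean a b + (1 - α) / 4 * (((a - b) / 2) ^ 2 / arithMean a b) := by gcongr
    _ = α * arithMean a b +
          (1 - α) * (arithMean a b + ((a - b) / 2) ^ 2 / (4 * arithMean a b)) := by
        field_simp
        ring
    _ < α * arithMean a b + (1 - α) * toaderMean a b := by
        gcongr
        exact arithMean_add_lt_toaderMean ha hb hab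

theorem stmt1 (α lam : ℝ) (hα : α ∈ Set.Ioo (0 : ℝ) 1)
    (hlam : lam ∈ Set.Ioo (1 / 2 : ℝ) 1) (hlam2 : lam ≤ 1 / 2 + Real.sqrt (1 - α) / 4)
    (a b : ℝ) (ha : 0 < a) (hb : 0 < b) (hab : a ≠ b) :
    contraMean (lam * a + (1 - lam) * b) (lam * b + (1 - lam) * a)
      < α * arithMean a b + (1 - α) * toaderMean a b := by
  exact stmt1_general α lam hα.2 (abs_le.2 ⟨by linarith [hlam.1, sqrt_nonneg (1 - α)], by linarith⟩)
    a b ha hb hab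
end

section
/- Let u, α ∈ (0,1) and define f_{u,α}(r) = u·r² − (1−α)·{(2/π)·[2E(r) − (1−r²)K(r)] − 1} for r ∈ (0,1). Then f_{u,α}(r) > 0 for all r ∈ (0,1) if and only if u ≥ (1−α)(4/π − 1). -/
/-!
Write `Δ = √(1 - r² sin² θ)` and `J r = ∫₀^{π/2} cos² θ / (1 + Δ) dθ`. Subtracting from the
integrand of `2E - (1 - r²)K` the derivative of `r² sin θ cos θ / (1 + Δ)`, which vanishes at both
endpoints, leaves `1 + r² cos² θ / (1 + Δ)`; hence `2E r - (1 - r²)K r = π/2 + r² J r`, and the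
function to be studied is `r² (u - (1 - α) (2/π) J r)`. Since `Δ` decreases in `r`, `J` is strictly
increasing on `[0, 1]`, and it is continuous, so the sharp bound for `u` is the endpoint value
`(1 - α) (2/π) J 1`, where `J 1 = 2 E 1 - π/2 = 2 - π/2` by the same identity.
-/

open Real

/-- The complete elliptic integral of the first kind. -/
noncomputable def ellipticK (r : ℝ) : ℝ :=
  ∫ θ in (0 : ℝ)..(π / 2), (Real.sqrt (1 - r ^ 2 * sin θ ^ 2))⁻¹

/-- The complete elliptic integral of the second kind. -/
noncomputable def ellipticE (r : ℝ) : ℝ :=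
  ∫ θ in (0 : ℝ)..(π / 2), Real.sqrt (1 - r ^ 2 * sin θ ^ 2)

open MeasureTheory Set Topology

lemma forall_mem_Ioo_lt_iff_of_strictMonoOn {X Y : Type*} [LinearOrder X] [TopologicalSpace X]
    [OrderTopology X] [DenselyOrdered X] [Preorder Y] [TopologicalSpace Y] [ClosedIicTopology Y]
    {f : X → Y} {a b : X} {c : Y} (hab : a < b) (hmono : StrictMonoOn f (Ioc a b))
    (hcont : ContinuousWithinAt f (Iio b) b) :
    (∀ x ∈ Ioo a b, f x < c) ↔ f b ≤ c := by
  refine ⟨fun h => ?_, fun h x hx =>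
    (hmono (Ioo_subset_Ioc_self hx) (right_mem_Ioc.2 hab) hx.2).trans_le h⟩
  have : (𝓝[<] b).NeBot := nhdsLT_neBot_of_exists_lt ⟨a, hab⟩
  refine le_of_tendsto hcont ?_
  filter_upwards [Ioo_mem_nhdsLT hab] with x hx using (h x hx).le

lemma cos_sq_le_one_sub_sq_mul_sin_sq {r : ℝ} (hr : r ^ 2 ≤ 1) (θ : ℝ) :
    cos θ ^ 2 ≤ 1 - r ^ 2 * sin θ ^ 2 := by
  rw [cos_sq']
  gcongr
  exact mul_le_of_le_one_left (sq_nonneg _) hr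

/-- Legendre's `Δ(θ) = √(1 - r² sin² θ)` for the modulus `r`, in terms of which `ellipticK` and
`ellipticE` are the integrals of `Δ⁻¹` and `Δ` over `[0, π/2]`. -/
noncomputable def legendreDelta (r θ : ℝ) : ℝ := √(1 - r ^ 2 * sin θ ^ 2)

namespace legendreDelta

@[fun_prop]
lemma continuous_uncurry : Continuous fun p : ℝ × ℝ => legendreDelta p.1 p.2 := by
  unfold legendreDelta
  fun_prop

lemma one_add_pos (r θ : ℝ) : 0 < 1 + legendreDelta r θ := by
  unfold legendreDelta
  positivity

lemma sq_eq {r : ℝ} (hr : r ^ 2 ≤ 1) (θ : ℝ) :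
    legendreDelta r θ ^ 2 = 1 - r ^ 2 * sin θ ^ 2 :=
  sq_sqrt ((sq_nonneg _).trans (cos_sq_le_one_sub_sq_mul_sin_sq hr θ))

lemma pos_of_sq_lt_one {r : ℝ} (hr : r ^ 2 < 1) (θ : ℝ) : 0 < legendreDelta r θ :=
  sqrt_pos.2 <| sub_pos.2 <| mul_lt_one_of_nonneg_of_lt_one_left (sq_nonneg _) hr (sin_sq_le_one θ)

lemma pos_of_cos_ne_zero {r θ : ℝ} (hr : r ^ 2 ≤ 1) (hθ : cos θ ≠ 0) : 0 < legendreDelta r θ :=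
  sqrt_pos.2 <| (sq_pos_of_ne_zero hθ).trans_le (cos_sq_le_one_sub_sq_mul_sin_sq hr θ)

lemma one_eq_cos {θ : ℝ} (hθ : 0 ≤ cos θ) : legendreDelta 1 θ = cos θ := by
  rw [legendreDelta, one_pow, one_mul, ← cos_sq', sqrt_sq hθ]

lemma antitoneOn_left (θ : ℝ) : AntitoneOn (legendreDelta · θ) (Ici 0) := by
  intro r hr s _ hrs
  have hr₀ : 0 ≤ r := hr
  exact sqrt_le_sqrt (by gcongr)

lemma strictAntiOn_left {θ : ℝ} (hθ : sin θ ≠ 0) :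
    StrictAntiOn (legendreDelta · θ) (Icc 0 1) := by
  intro r hr s hs hrs
  have hsq : r ^ 2 < s ^ 2 := pow_lt_pow_left₀ hrs hr.1 two_ne_zero
  have hnonneg : 0 ≤ 1 - s ^ 2 * sin θ ^ 2 :=
    (sq_nonneg _).trans (cos_sq_le_one_sub_sq_mul_sin_sq (pow_le_one₀ hs.1 hs.2) θ)
  exact sqrt_lt_sqrt hnonneg (by gcongr)

lemma hasDerivAt {r θ : ℝ} (h : 0 < legendreDelta r θ) :
    HasDerivAt (legendreDelta r) (-(r ^ 2 * (sin θ * cos θ)) / legendreDelta r θ) θ := by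
  refine (((((hasDerivAt_sin θ).fun_pow 2).const_mul (r ^ 2)).const_sub 1).sqrt
    (sqrt_pos.1 h).ne').congr_deriv ?_
  rw [← legendreDelta]
  field_simp
  push_cast
  ring

end legendreDelta

/-- The integral `J r = ∫₀^{π/2} cos² θ / (1 + Δ(θ)) dθ`, equal to
`(2E(r) - (1 - r²)K(r) - π/2) / r²` for `0 < r ≤ 1` but manifestly continuous and increasing. -/
noncomputable def ellipticJ (r : ℝ) : ℝ :=
  ∫ θ in (0 : ℝ)..(π / 2), cos θ ^ 2 / (1 + legendreDelta r θ)

lemma continuous_cos_sq_div_one_add_legendreDelta {X : Type*} [TopologicalSpace X] {f g : X → ℝ}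
    (hf : Continuous f) (hg : Continuous g) :
    Continuous fun x => cos (g x) ^ 2 / (1 + legendreDelta (f x) (g x)) :=
  Continuous.div (by fun_prop) (by fun_prop) fun _ => (legendreDelta.one_add_pos _ _).ne'

lemma continuous_ellipticJ : Continuous ellipticJ :=
  intervalIntegral.continuous_parametric_intervalIntegral_of_continuous'
    (continuous_cos_sq_div_one_add_legendreDelta continuous_fst continuous_snd) _ _

lemma strictMonoOn_ellipticJ : StrictMonoOn ellipticJ (Icc 0 1) := by
  intro r hr s hs hrs
  have hpi := pi_pos
  have hcont (t : ℝ) : Continuous fun θ => cos θ ^ 2 / (1 + legendreDelta t θ) :=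
    continuous_cos_sq_div_one_add_legendreDelta continuous_const continuous_id
  refine intervalIntegral.integral_lt_integral_of_continuousOn_of_le_of_exists_lt
    (by positivity) (hcont r).continuousOn (hcont s).continuousOn (fun θ _ => ?_)
    ⟨π / 4, ⟨by positivity, by linarith⟩, ?_⟩
  · exact div_le_div_of_nonneg_left (sq_nonneg _) (legendreDelta.one_add_pos s θ)
      (add_le_add_right (legendreDelta.antitoneOn_left θ hr.1 hs.1 hrs.le) 1)
  · have hcos : 0 < cos (π / 4) := cos_pos_of_mem_Ioo ⟨by linarith, by linarith⟩
    have hsin : 0 < sin (π / 4) := sin_pos_of_pos_of_lt_pi (by positivity) (by linarith)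
    exact div_lt_div_of_pos_left (pow_pos hcos 2) (legendreDelta.one_add_pos s _)
      (add_lt_add_right (legendreDelta.strictAntiOn_left hsin.ne' hr hs hrs) 1)

lemma hasDerivAt_sin_mul_cos_div_one_add_legendreDelta {r θ : ℝ} (hr : r ^ 2 ≤ 1)
    (hθ : cos θ ≠ 0) :
    HasDerivAt (fun θ => r ^ 2 * (sin θ * cos θ) / (1 + legendreDelta r θ))
      (2 * legendreDelta r θ - (1 - r ^ 2) * (legendreDelta r θ)⁻¹
        - (1 + r ^ 2 * (cos θ ^ 2 / (1 + legendreDelta r θ)))) θ := by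
  have hΔ := legendreDelta.pos_of_cos_ne_zero hr hθ
  have hne := (legendreDelta.one_add_pos r θ).ne'
  refine ((((hasDerivAt_sin θ).fun_mul (hasDerivAt_cos θ)).const_mul (r ^ 2)).fun_div
    ((legendreDelta.hasDerivAt hΔ).const_add 1) hne).congr_deriv ?_
  have hsq := legendreDelta.sq_eq hr θ
  generalize legendreDelta r θ = Δ at *
  have hrs : r ^ 2 * sin θ ^ 2 = (1 - Δ) * (1 + Δ) := by linear_combination hsq
  have hrc : r ^ 2 * cos θ ^ 2 = Δ ^ 2 - (1 - r ^ 2) := by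
    linear_combination r ^ 2 * cos_sq' θ - hsq
  calc _ = r ^ 2 * cos θ ^ 2 / (1 + Δ) - r ^ 2 * sin θ ^ 2 / (1 + Δ)
          + (r ^ 2 * sin θ ^ 2) * (r ^ 2 * cos θ ^ 2) / (Δ * (1 + Δ) ^ 2) := by
        field_simp
        ring
    _ = r ^ 2 * cos θ ^ 2 / Δ - (1 - Δ) - r ^ 2 * (cos θ ^ 2 / (1 + Δ)) := by
        rw [hrs]
        field_simp
        ring
    _ = 2 * Δ - (1 - r ^ 2) * Δ⁻¹ - (1 + r ^ 2 * (cos θ ^ 2 / (1 + Δ))) := by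
        rw [hrc]
        field_simp
        ring

lemma intervalIntegrable_mul_inv_legendreDelta {r : ℝ} (hr : r ^ 2 ≤ 1) (a b : ℝ) :
    IntervalIntegrable (fun θ => (1 - r ^ 2) * (legendreDelta r θ)⁻¹) volume a b := by
  rcases hr.eq_or_lt with hr | hr
  · simp [hr]
  · have hΔ : Continuous (legendreDelta r) := by fun_prop
    have hinv := hΔ.inv₀ fun θ => (legendreDelta.pos_of_sq_lt_one hr θ).ne'
    exact (hinv.const_mul _).intervalIntegrable a b

-- For `r = 1` the integral `K` diverges, but its junk value `0` is multiplied by `1 - r ^ 2 = 0`.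
lemma two_mul_ellipticE_sub_mul_ellipticK {r : ℝ} (hr : r ^ 2 ≤ 1) :
    2 * ellipticE r - (1 - r ^ 2) * ellipticK r = π / 2 + r ^ 2 * ellipticJ r := by
  have hJ : Continuous fun θ => cos θ ^ 2 / (1 + legendreDelta r θ) :=
    continuous_cos_sq_div_one_add_legendreDelta continuous_const continuous_id
  have hEi : IntervalIntegrable (fun θ => 2 * legendreDelta r θ) volume 0 (π / 2) :=
    Continuous.intervalIntegrable (by fun_prop) _ _
  have hKi := intervalIntegrable_mul_inv_legendreDelta hr 0 (π / 2)
  have h1i : IntervalIntegrable (fun _ => (1 : ℝ)) volume 0 (π / 2) :=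
    intervalIntegrable_const
  have hJi := (hJ.const_mul (r ^ 2)).intervalIntegrable (μ := volume) 0 (π / 2)
  have hboundary : ContinuousOn
      (fun θ => r ^ 2 * (sin θ * cos θ) / (1 + legendreDelta r θ)) (Icc 0 (π / 2)) :=
    (Continuous.div (by fun_prop) (by fun_prop)
      fun θ => (legendreDelta.one_add_pos r θ).ne').continuousOn
  have hftc := intervalIntegral.integral_eq_sub_of_hasDerivAt_of_le pi_div_two_pos.le hboundary
    (fun θ hθ => hasDerivAt_sin_mul_cos_div_one_add_legendreDelta hr
      (cos_pos_of_mem_Ioo ⟨by linarith [hθ.1, pi_pos], hθ.2⟩).ne')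
    ((hEi.sub hKi).sub (h1i.add hJi))
  rw [intervalIntegral.integral_sub (hEi.sub hKi) (h1i.add hJi),
    intervalIntegral.integral_sub hEi hKi, intervalIntegral.integral_add h1i hJi] at hftc
  simp only [intervalIntegral.integral_const_mul, intervalIntegral.integral_const, cos_pi_div_two,
    sin_zero, mul_zero, zero_mul, zero_div, sub_zero, smul_eq_mul, mul_one] at hftc
  exact sub_eq_zero.1 hftc

lemma ellipticE_one : ellipticE 1 = 1 := by
  calc ellipticE 1 = ∫ θ in (0 : ℝ)..(π / 2), cos θ := by
        refine intervalIntegral.integral_congr fun θ hθ => ?_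
        rw [uIcc_of_le pi_div_two_pos.le] at hθ
        exact legendreDelta.one_eq_cos (cos_nonneg_of_mem_Icc ⟨by linarith [hθ.1, pi_pos], hθ.2⟩)
    _ = 1 := by simp

lemma ellipticJ_one : ellipticJ 1 = 2 - π / 2 := by
  have h := two_mul_ellipticE_sub_mul_ellipticK (r := 1) (one_pow 2).le
  rw [ellipticE_one] at h
  linarith

theorem stmt3_general (u α : ℝ) (hα : α < 1) :
    (∀ r ∈ Set.Ioo (0 : ℝ) 1,
      0 < u * r ^ 2 -
        (1 - α) * (2 / π * (2 * ellipticE r - (1 - r ^ 2) * ellipticK r) - 1)) ↔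
    u ≥ (1 - α) * (4 / π - 1) := by
  set g : ℝ → ℝ := fun r => (1 - α) * (2 / π) * ellipticJ r with hg
  have hfactor {r : ℝ} (hr : r ∈ Ioo (0 : ℝ) 1) :
      u * r ^ 2 - (1 - α) * (2 / π * (2 * ellipticE r - (1 - r ^ 2) * ellipticK r) - 1) =
        r ^ 2 * (u - g r) := by
    rw [two_mul_ellipticE_sub_mul_ellipticK (pow_le_one₀ hr.1.le hr.2.le)]
    simp only [hg]
    field_simp
    ring
  have hα' : 0 < 1 - α := sub_pos.2 hα
  have hmono : StrictMonoOn g (Ioc 0 1) :=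
    (strictMono_mul_left_of_pos (by positivity)).comp_strictMonoOn
      (strictMonoOn_ellipticJ.mono Ioc_subset_Icc_self)
  have hcont : Continuous g := continuous_ellipticJ.const_mul _
  have hg1 : g 1 = (1 - α) * (4 / π - 1) := by
    simp only [hg, ellipticJ_one]
    field_simp
    ring
  rw [ge_iff_le, ← hg1,
    ← forall_mem_Ioo_lt_iff_of_strictMonoOn one_pos hmono hcont.continuousWithinAt]
  refine forall₂_congr fun r hr => ?_
  rw [hfactor hr, mul_pos_iff_of_pos_left (pow_pos hr.1 2), sub_pos]

theorem stmt3 (u α : ℝ) (hu : u ∈ Set.Ioo (0 : ℝ) 1) (hα : α ∈ Set.Ioo (0 : ℝ) 1) :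
    (∀ r ∈ Set.Ioo (0 : ℝ) 1,
      0 < u * r ^ 2 -
        (1 - α) * (2 / π * (2 * ellipticE r - (1 - r ^ 2) * ellipticK r) - 1)) ↔
    u ≥ (1 - α) * (4 / π - 1) :=
  stmt3_general u α hα.2
end

section
/- For all r ∈ (0,1), writing r' = √(1−r²), one has the upper bound E(r) < π·[(r' + (2/π)(1−r')²)/(1+r')]. -/
/-!
The integrand of `E(r)` takes values in `[x, 1]`, where `x = √(1 - r²)`. The tangent to the square
root gives `√u ≤ (u + c²) / (2c)`, used with the midpoint `c = (1 + x) / 2`; this bounds the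
integrand in terms of its square `1 - r² sin² θ`, whose mean over `[0, π / 2]` is `1 - r² / 2`. This
gives the claimed inequality with `3 / 8` in place of the larger constant `2 / π`, and
`(1 - x)² > 0` makes it strict.
-/

open Real

lemma sqrt_le_add_sq_div_two_mul {u c : ℝ} (hu : 0 ≤ u) (hc : 0 < c) :
    √u ≤ (u + c ^ 2) / (2 * c) := by
  rw [le_div_iff₀ (by positivity)]
  calc √u * (2 * c) = 2 * √u * c := by ring
    _ ≤ √u ^ 2 + c ^ 2 := two_mul_le_add_sq _ _
    _ = u + c ^ 2 := by rw [sq_sqrt hu]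

lemma integral_sin_sq_zero_pi_div_two : ∫ θ in (0 : ℝ)..(π / 2), sin θ ^ 2 = π / 4 := by
  rw [integral_sin_sq, sin_zero, cos_pi_div_two]
  ring

lemma integral_sub_mul_sin_sq (a b : ℝ) :
    ∫ θ in (0 : ℝ)..(π / 2), (a - b * sin θ ^ 2) = π / 2 * (a - b / 2) := by
  rw [intervalIntegral.integral_sub intervalIntegrable_const
      (Continuous.intervalIntegrable (by fun_prop) _ _), intervalIntegral.integral_const,
    intervalIntegral.integral_const_mul, integral_sin_sq_zero_pi_div_two, smul_eq_mul]
  ring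

lemma one_sub_sq_mul_sin_sq_nonneg {r : ℝ} (hr : |r| ≤ 1) (θ : ℝ) :
    0 ≤ 1 - r ^ 2 * sin θ ^ 2 :=
  sub_nonneg.2 <| mul_le_one₀ ((sq_le_one_iff_abs_le_one r).2 hr) (sq_nonneg _) (sin_sq_le_one θ)

lemma ellipticE_le_add_sq_div_two_mul {r c : ℝ} (hr : |r| ≤ 1) (hc : 0 < c) :
    ellipticE r ≤ π / 2 * ((1 - r ^ 2 / 2 + c ^ 2) / (2 * c)) :=
  calc ellipticE r
    _ ≤ ∫ θ in (0 : ℝ)..(π / 2), (1 - r ^ 2 * sin θ ^ 2 + c ^ 2) / (2 * c) :=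
      intervalIntegral.integral_mono (by positivity)
        (Continuous.intervalIntegrable (by fun_prop) _ _)
        (Continuous.intervalIntegrable (by fun_prop) _ _)
        fun θ ↦ sqrt_le_add_sq_div_two_mul (one_sub_sq_mul_sin_sq_nonneg hr θ) hc
    _ = (∫ θ in (0 : ℝ)..(π / 2), (1 + c ^ 2 - r ^ 2 * sin θ ^ 2)) / (2 * c) := by
      simp only [intervalIntegral.integral_div, sub_add_eq_add_sub]
    _ = π / 2 * ((1 - r ^ 2 / 2 + c ^ 2) / (2 * c)) := by
      rw [integral_sub_mul_sin_sq]
      ring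

lemma ellipticE_le_pi_mul_div_one_add_sqrt {r : ℝ} (hr : |r| ≤ 1) :
    ellipticE r ≤ π * ((√(1 - r ^ 2) + 3 / 8 * (1 - √(1 - r ^ 2)) ^ 2) / (1 + √(1 - r ^ 2))) := by
  have hsq : √(1 - r ^ 2) ^ 2 = 1 - r ^ 2 :=
    sq_sqrt (sub_nonneg.2 ((sq_le_one_iff_abs_le_one r).2 hr))
  have hx : 0 ≤ √(1 - r ^ 2) := sqrt_nonneg _
  set x := √(1 - r ^ 2)
  have hr_sq : r ^ 2 = 1 - x ^ 2 := by rw [hsq, sub_sub_cancel]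
  calc ellipticE r
    _ ≤ π / 2 * ((1 - r ^ 2 / 2 + ((1 + x) / 2) ^ 2) / (2 * ((1 + x) / 2))) :=
      ellipticE_le_add_sq_div_two_mul hr (by positivity)
    _ = π * ((x + 3 / 8 * (1 - x) ^ 2) / (1 + x)) := by
      rw [hr_sq]
      field_simp
      ring

lemma three_eighths_lt_two_div_pi : 3 / 8 < 2 / π := by
  rw [lt_div_iff₀ pi_pos]
  linarith [pi_lt_four]

theorem stmt6 (r : ℝ) (hr : r ∈ Set.Ioo (0 : ℝ) 1) :
    ellipticE r < π * ((Real.sqrt (1 - r ^ 2) + 2 / π * (1 - Real.sqrt (1 - r ^ 2)) ^ 2) /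
      (1 + Real.sqrt (1 - r ^ 2))) := by
  obtain ⟨hr_pos, hr_lt⟩ := hr
  have hr_abs : |r| ≤ 1 := abs_le.2 ⟨by linarith, hr_lt.le⟩
  have hx_lt : √(1 - r ^ 2) < 1 := by
    rw [sqrt_lt' one_pos, one_pow]
    exact sub_lt_self 1 (pow_pos hr_pos 2)
  have hterm : 3 / 8 * (1 - √(1 - r ^ 2)) ^ 2 < 2 / π * (1 - √(1 - r ^ 2)) ^ 2 :=
    mul_lt_mul_of_pos_right three_eighths_lt_two_div_pi (pow_pos (sub_pos.2 hx_lt) 2)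
  refine (ellipticE_le_pi_mul_div_one_add_sqrt hr_abs).trans_lt ?_
  gcongr π * ((_ + ?_) / _)
end

section
/- For all x ∈ (0,1), one has (17 + 30x + 17x²)/(8(1+x)) − 3(1+x)/2 > (1/2)·√((1+x²)/2) + (1+x)/4. (Hence the lower bound (π/2)·[(17+30r'+17r'²)/(8(1+r')) − 3(1+r')/2] for E(r) is sharper than the lower bound (π/2)·[(1/2)√((1+r'²)/2) + (1+r')/4].) -/
open Real

/-!
The quadratic mean of `a` and `b` is the geometric mean of their arithmetic mean `(a + b) / 2` and
their contraharmonic mean `(a ^ 2 + b ^ 2) / (a + b)`, so it lies strictly below half the sum of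
these two means when `a ≠ b`. For `a = 1` and `b = x`, the left-hand side is half of that bound
plus `(1 + x) / 4`.
-/

theorem sqrt_mul_lt_half_add {u v : ℝ} (hu : 0 ≤ u) (hv : 0 ≤ v) (huv : u ≠ v) :
    √(u * v) < (u + v) / 2 := by
  have am_gm : u ^ (1 / 2 : ℝ) * v ^ (1 / 2 : ℝ) < 1 / 2 * u + 1 / 2 * v :=
    (geom_mean_lt_arith_mean2_weighted_iff_of_pos one_half_pos one_half_pos hu hv
      (add_halves 1)).mpr huv
  calc √(u * v)
    _ = u ^ (1 / 2 : ℝ) * v ^ (1 / 2 : ℝ) := by rw [sqrt_eq_rpow, mul_rpow hu hv]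
    _ < 1 / 2 * u + 1 / 2 * v := am_gm
    _ = (u + v) / 2 := by ring

theorem half_add_lt_sq_add_sq_div_add {a b : ℝ} (hab : 0 < a + b) (hne : a ≠ b) :
    (a + b) / 2 < (a ^ 2 + b ^ 2) / (a + b) := by
  rw [div_lt_div_iff₀ two_pos hab]
  have sq_sub_pos : 0 < (a - b) ^ 2 := sq_pos_of_ne_zero (sub_ne_zero.mpr hne)
  linarith

theorem sqrt_half_sq_add_sq_lt {a b : ℝ} (hab : 0 < a + b) (hne : a ≠ b) :
    √((a ^ 2 + b ^ 2) / 2) < ((a + b) / 2 + (a ^ 2 + b ^ 2) / (a + b)) / 2 := by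
  have sq_quadratic_mean :
      (a ^ 2 + b ^ 2) / 2 = (a + b) / 2 * ((a ^ 2 + b ^ 2) / (a + b)) := by
    field_simp
  rw [sq_quadratic_mean]
  exact sqrt_mul_lt_half_add (by positivity) (by positivity)
    (half_add_lt_sq_add_sq_div_add hab hne).ne

theorem stmt7_general {x : ℝ} (hx : -1 < x) (hx_ne : x ≠ 1) :
    (17 + 30 * x + 17 * x ^ 2) / (8 * (1 + x)) - 3 * (1 + x) / 2
      > 1 / 2 * √((1 + x ^ 2) / 2) + (1 + x) / 4 := by
  have hpos : 0 < 1 + x := by linarith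
  have quadratic_mean_lt :
      √((1 + x ^ 2) / 2) < ((1 + x) / 2 + (1 + x ^ 2) / (1 + x)) / 2 := by
    simpa only [one_pow] using sqrt_half_sq_add_sq_lt hpos hx_ne.symm
  calc (17 + 30 * x + 17 * x ^ 2) / (8 * (1 + x)) - 3 * (1 + x) / 2
    _ = 1 / 2 * (((1 + x) / 2 + (1 + x ^ 2) / (1 + x)) / 2) + (1 + x) / 4 := by
      field_simp
      ring
    _ > 1 / 2 * √((1 + x ^ 2) / 2) + (1 + x) / 4 := by gcongr

theorem stmt7 (x : ℝ) (hx : x ∈ Set.Ioo (0 : ℝ) 1) :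
    (17 + 30 * x + 17 * x ^ 2) / (8 * (1 + x)) - 3 * (1 + x) / 2
      > 1 / 2 * Real.sqrt ((1 + x ^ 2) / 2) + (1 + x) / 4 :=
  stmt7_general (by linarith [hx.1]) hx.2.ne
end

section
/- For all x ∈ (0,1), one has (17 + 30x + 17x²)/(8(1+x)) − 3(1+x)/2 > √(6 + 2x − 3(1−x²))/(2√2). (Hence the lower bound (π/2)·[(17+30r'+17r'²)/(8(1+r')) − 3(1+r')/2] for E(r) is sharper than the lower bound (π/2)·√(6 + 2r' − 3r²)/(2√2).) -/
open Real

/-! Put `a = (1 + x) / 2` and `c = (6 + 2 * x - 3 * (1 - x ^ 2)) / 8`. The right side is `√c`, and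
the left side is the Newton iterate `(a + c / a) / 2` for `√c` started at `a`. This iterate exceeds
`√c` by the strict AM-GM inequality for `a` and `c / a`, which are distinct because
`c - a ^ 2 = (1 - x) ^ 2 / 8` is nonzero. -/

theorem sqrt_lt_half_add_div {a c : ℝ} (ha : 0 < a) (hc : 0 ≤ c) (hac : c ≠ a ^ 2) :
    √c < (a + c / a) / 2 := by
  have sqrt_ne : √c ≠ a := fun h ↦ hac (by rw [← h, sq_sqrt hc])
  have gap : (a + c / a) / 2 - √c = (√c - a) ^ 2 / (2 * a) := by
    field_simp
    rw [sub_sq, sq_sqrt hc]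
    ring
  have gap_pos : 0 < (√c - a) ^ 2 / (2 * a) :=
    div_pos (sq_pos_of_ne_zero (sub_ne_zero.mpr sqrt_ne)) (by positivity)
  linarith

theorem sqrt_div_two_mul_sqrt_two (c : ℝ) : √c / (2 * √2) = √(c / 8) := by
  have sqrt_eight : √8 = 2 * √2 := by
    rw [show (8 : ℝ) = 2 ^ 2 * 2 by norm_num, sqrt_mul (by positivity), sqrt_sq zero_le_two]
  rw [sqrt_div' c (by norm_num), sqrt_eight]

theorem stmt8_general {x : ℝ} (hx : -1 < x) (hx1 : x ≠ 1) :
    (17 + 30 * x + 17 * x ^ 2) / (8 * (1 + x)) - 3 * (1 + x) / 2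
      > Real.sqrt (6 + 2 * x - 3 * (1 - x ^ 2)) / (2 * Real.sqrt 2) := by
  have one_add_pos : 0 < 1 + x := by linarith
  set c := (6 + 2 * x - 3 * (1 - x ^ 2)) / 8 with hc
  have c_sub_sq : c - ((1 + x) / 2) ^ 2 = (1 - x) ^ 2 / 8 := by rw [hc]; ring
  have c_nonneg : 0 ≤ c := by
    rw [sub_eq_iff_eq_add.mp c_sub_sq]
    positivity
  have c_ne_sq : c ≠ ((1 + x) / 2) ^ 2 := by
    have : 1 - x ≠ 0 := sub_ne_zero.mpr hx1.symm
    rw [← sub_ne_zero, c_sub_sq]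
    positivity
  calc √(6 + 2 * x - 3 * (1 - x ^ 2)) / (2 * √2)
      = √c := sqrt_div_two_mul_sqrt_two _
    _ < ((1 + x) / 2 + c / ((1 + x) / 2)) / 2 :=
      sqrt_lt_half_add_div (half_pos one_add_pos) c_nonneg c_ne_sq
    _ = (17 + 30 * x + 17 * x ^ 2) / (8 * (1 + x)) - 3 * (1 + x) / 2 := by
      rw [hc]
      field_simp
      ring

theorem stmt8 (x : ℝ) (hx : x ∈ Set.Ioo (0 : ℝ) 1) :
    (17 + 30 * x + 17 * x ^ 2) / (8 * (1 + x)) - 3 * (1 + x) / 2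
      > Real.sqrt (6 + 2 * x - 3 * (1 - x ^ 2)) / (2 * Real.sqrt 2) :=
  stmt8_general (by linarith [hx.1]) hx.2.ne
end

section
/- Let a, b > 0 with a ≠ b, and define J(x) = C(xa+(1−x)b, xb+(1−x)a) for x ∈ [1/2, 1]. Then J is continuous and strictly increasing on [1/2, 1], with J(1/2) = A(a,b) and J(1) = C(a,b). -/
/-!
The contraharmonic mean exceeds the arithmetic mean by `(a - b)² / (2 (a + b))`. Replacing `(a, b)`
by `(xa + (1 - x)b, xb + (1 - x)a)` keeps the sum and multiplies the difference by `2x - 1`, so `J`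
is a quadratic polynomial in `x` with vertex at `1/2` and, when `a ≠ b`, positive leading
coefficient.
-/

open Real

/-- The function `J(x) = C(xa + (1 - x)b, xb + (1 - x)a)`, which interpolates between the arithmetic
mean at `x = 1/2` and the contraharmonic mean at `x = 1`. It is defined for every real `x`. -/
noncomputable def contraMeanPath (a b x : ℝ) : ℝ :=
  contraMean (x * a + (1 - x) * b) (x * b + (1 - x) * a)

-- For `a + b = 0` both sides are `0`, because `x / 0 = 0`.
lemma contraMean_eq_arithMean_add (a b : ℝ) :
    contraMean a b = arithMean a b + (a - b) ^ 2 / (2 * (a + b)) := by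
  rw [contraMean, arithMean]
  rcases eq_or_ne (a + b) 0 with h | h
  · simp [h]
  · field_simp
    ring

lemma contraMeanPath_eq (a b x : ℝ) :
    contraMeanPath a b x
      = arithMean a b + (2 * x - 1) ^ 2 * ((a - b) ^ 2 / (2 * (a + b))) := by
  have h_sum : x * a + (1 - x) * b + (x * b + (1 - x) * a) = a + b := by ring
  have h_diff : x * a + (1 - x) * b - (x * b + (1 - x) * a) = (2 * x - 1) * (a - b) := by ring
  rw [contraMeanPath, contraMean_eq_arithMean_add, arithMean, arithMean, h_sum, h_diff, mul_pow,
    mul_div_assoc]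

lemma continuous_contraMeanPath (a b : ℝ) : Continuous (contraMeanPath a b) := by
  simp only [funext (contraMeanPath_eq a b)]
  fun_prop

lemma strictMonoOn_contraMeanPath {a b : ℝ} (h : 0 < a + b) (hab : a ≠ b) :
    StrictMonoOn (contraMeanPath a b) (Set.Ici (1 / 2)) := by
  intro x hx y _ hxy
  have h_coeff : 0 < (a - b) ^ 2 / (2 * (a + b)) :=
    div_pos (sq_pos_of_ne_zero (sub_ne_zero.mpr hab)) (mul_pos two_pos h)
  have h_nonneg : 0 ≤ 2 * x - 1 := by linarith [Set.mem_Ici.mp hx]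
  have h_sq : (2 * x - 1) ^ 2 < (2 * y - 1) ^ 2 :=
    pow_lt_pow_left₀ (by linarith) h_nonneg two_ne_zero
  simpa only [contraMeanPath_eq, add_lt_add_iff_left] using mul_lt_mul_of_pos_right h_sq h_coeff

lemma contraMeanPath_one_half (a b : ℝ) : contraMeanPath a b (1 / 2) = arithMean a b := by
  simp [contraMeanPath_eq]

lemma contraMeanPath_one (a b : ℝ) : contraMeanPath a b 1 = contraMean a b := by
  simp [contraMeanPath]

theorem stmt12_general (a b : ℝ) (h : 0 < a + b) (hab : a ≠ b) :
    Continuous (contraMeanPath a b) ∧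
    StrictMonoOn (contraMeanPath a b) (Set.Ici (1 / 2)) ∧
    contraMeanPath a b (1 / 2) = arithMean a b ∧
    contraMeanPath a b 1 = contraMean a b :=
  ⟨continuous_contraMeanPath a b, strictMonoOn_contraMeanPath h hab,
    contraMeanPath_one_half a b, contraMeanPath_one a b⟩

theorem stmt12 (a b : ℝ) (ha : 0 < a) (hb : 0 < b) (hab : a ≠ b) :
    ContinuousOn (fun x : ℝ => contraMean (x * a + (1 - x) * b) (x * b + (1 - x) * a))
      (Set.Icc (1 / 2 : ℝ) 1) ∧
    StrictMonoOn (fun x : ℝ => contraMean (x * a + (1 - x) * b) (x * b + (1 - x) * a))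
      (Set.Icc (1 / 2 : ℝ) 1) ∧
    contraMean ((1 / 2 : ℝ) * a + (1 - 1 / 2) * b) ((1 / 2 : ℝ) * b + (1 - 1 / 2) * a)
      = arithMean a b ∧
    contraMean ((1 : ℝ) * a + (1 - 1) * b) ((1 : ℝ) * b + (1 - 1) * a) = contraMean a b := by
  obtain ⟨h_cont, h_mono, h_half, h_one⟩ := stmt12_general a b (add_pos ha hb) hab
  exact ⟨h_cont.continuousOn, h_mono.mono Set.Icc_subset_Ici_self, h_half, h_one⟩
end
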